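/- Let G be a simple graph whose complement is the cycle C_m of length m > 3, with the single extra vertex construction G_{(a)_1}: the complement Ḡ consists of the cycle 1-2-...-(t+3)-1 together with one extra vertex t+4 joined only to vertex 1, where m = t+3 and t ≥ 1. Then the edge ideal I(G) satisfies β_{t+1, t+4}(I(G)) ≠ 0 and β_{t+2, j}(I(G)) = 0 for all j, so pd(I(G)) = t+1 while index(I(G)) = t. -/

import Mathlib

open Finsupp

namespace EP

variable (K : Type) [Field K]

/-! ## Simplicial chains over a linearly ordered vertex set -/

variable {V : Type} [Fintype V] [DecidableEq V] [LinearOrder V]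

/-- Boundary of a single (oriented) face, given as a finset. -/
noncomputable def bdFace (s : Finset V) : Finset V →₀ K :=
  ∑ v ∈ s, ((-1 : K) ^ ((s.filter (fun w => w < v)).card)) • Finsupp.single (s.erase v) 1

/-- The simplicial boundary map on the free module on all finsets of vertices
(the augmented oriented chain complex, with the empty set playing the role of
the `(-1)`-dimensional face). -/
noncomputable def bdS : (Finset V →₀ K) →ₗ[K] (Finset V →₀ K) :=
  Finsupp.lsum K fun s => LinearMap.toSpanSingleton K (Finset V →₀ K) (bdFace K s)

/-- Chains supported on faces of a complex `Δ` having `k` vertices. -/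
noncomputable def faceSpan (Δ : Set (Finset V)) (k : ℕ) : Submodule K (Finset V →₀ K) :=
  Submodule.span K {c | ∃ F ∈ Δ, F.card = k ∧ c = Finsupp.single F 1}

/-- Dimension of the `d`-th reduced simplicial homology of `Δ` over `K`. -/
noncomputable def redHomRank (Δ : Set (Finset V)) (d : ℕ) : ℕ :=
  Module.finrank K ↥(faceSpan K Δ (d+1) ⊓ LinearMap.ker (bdS K)) -
    Module.finrank K
      ↥(Submodule.map (bdS K) (faceSpan K Δ (d+2)) ⊓
          (faceSpan K Δ (d+1) ⊓ LinearMap.ker (bdS K)))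

/-- The flag complex of a graph: faces are the cliques. -/
def flagComplex (G : SimpleGraph V) : Set (Finset V) :=
  {F | ∀ i ∈ F, ∀ j ∈ F, i ≠ j → G.Adj i j}

/-- The flag complex of the induced subgraph of `G` on `W`. -/
def flagComplexOn (G : SimpleGraph V) (W : Finset V) : Set (Finset V) :=
  {F | (F : Set V) ⊆ (W : Set V) ∧ ∀ i ∈ F, ∀ j ∈ F, i ≠ j → G.Adj i j}

/-- The induced subcomplex of `Δ` on a vertex subset `W`. -/
def restrictComplex (Δ : Set (Finset V)) (W : Finset V) : Set (Finset V) :=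
  {F | F ∈ Δ ∧ F ⊆ W}

/-- The oriented `1`-chain `[a,b]` (so `[a,b] = -[b,a]`). -/
noncomputable def edgeChain (a b : V) : Finset V →₀ K :=
  if a < b then Finsupp.single {a, b} 1 else -Finsupp.single {a, b} 1

/-- The oriented `2`-chain `[x,y,z]`, antisymmetric under transpositions. -/
noncomputable def triChain (x y z : V) : Finset V →₀ K :=
  if (x < y ∧ y < z) ∨ (y < z ∧ z < x) ∨ (z < x ∧ x < y)
  then Finsupp.single {x, y, z} 1
  else -Finsupp.single {x, y, z} 1

/-! ## Graded Betti numbers of monomial ideals via the Taylor complex -/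

variable {n : ℕ}

/-- The multidegree lcm of the monomial generators indexed by `S`. -/
def mlcm {r : ℕ} (g : Fin r → (Fin n → ℕ)) (S : Finset (Fin r)) : Fin n → ℕ :=
  fun x => S.sup fun k => g k x

/-- The differential of the Taylor complex tensored with the residue field `K`. -/
noncomputable def bdT {r : ℕ} (g : Fin r → (Fin n → ℕ)) :
    (Finset (Fin r) →₀ K) →ₗ[K] (Finset (Fin r) →₀ K) :=
  Finsupp.lsum K fun S => LinearMap.toSpanSingleton K (Finset (Fin r) →₀ K)
    (∑ k ∈ S, if mlcm g (S.erase k) = mlcm g S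
      then ((-1 : K) ^ ((S.filter (fun j => j < k)).card)) • Finsupp.single (S.erase k) (1 : K)
      else 0)

/-- The degree-`j` strand of the Taylor complex in homological degree `p`. -/
noncomputable def strand {r : ℕ} (g : Fin r → (Fin n → ℕ)) (p j : ℕ) :
    Submodule K (Finset (Fin r) →₀ K) :=
  Submodule.span K
    {c | ∃ S : Finset (Fin r), S.card = p ∧ (∑ x, mlcm g S x) = j ∧ c = Finsupp.single S 1}

/-- `dim_K Tor_p(S/I, K)_j`, computed from the Taylor complex on the monomial
generators `g` of `I`. -/
noncomputable def torRank {r : ℕ} (g : Fin r → (Fin n → ℕ)) (p j : ℕ) : ℕ :=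
  Module.finrank K ↥(strand K g p j ⊓ LinearMap.ker (bdT K g)) -
    Module.finrank K
      ↥(Submodule.map (bdT K g) (strand K g (p+1) j) ⊓
          (strand K g p j ⊓ LinearMap.ker (bdT K g)))

/-- The graded Betti number `β_{i,j}(I)` of the monomial ideal `I` generated by
the monomials with exponent vectors `g`, i.e. `dim_K Tor_i(I, K)_j = dim_K Tor_{i+1}(S/I, K)_j`. -/
noncomputable def betti {r : ℕ} (g : Fin r → (Fin n → ℕ)) (i j : ℕ) : ℕ :=
  torRank K g (i+1) j

/-- The monomial with exponent vector `a`. -/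
noncomputable def mono (a : Fin n → ℕ) : MvPolynomial (Fin n) K :=
  MvPolynomial.monomial (Finsupp.equivFunOnFinite.symm a) 1

/-- `g` is a list of exponent vectors of monomials generating the ideal `I`. -/
def IsGenSet {r : ℕ} (g : Fin r → (Fin n → ℕ)) (I : Ideal (MvPolynomial (Fin n) K)) : Prop :=
  Ideal.span (Set.range fun k => mono K (g k)) = I

/-- The ideal (generated by the monomials with exponent vectors `g`) has a
`d`-linear resolution. -/
def HasLinRes {r : ℕ} (g : Fin r → (Fin n → ℕ)) (d : ℕ) : Prop :=
  ∀ i j, betti K g i j ≠ 0 → j = i + d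

/-- Castelnuovo–Mumford regularity of a monomial ideal, from its Betti numbers. -/
noncomputable def regT {r : ℕ} (g : Fin r → (Fin n → ℕ)) : ℕ :=
  sSup {d | ∃ i j, betti K g i j ≠ 0 ∧ j = i + d}

/-! ## Edge ideals -/

/-- The edge ideal of a simple graph. -/
noncomputable def edgeIdeal (G : SimpleGraph (Fin n)) : Ideal (MvPolynomial (Fin n) K) :=
  Ideal.span {m | ∃ i j : Fin n, G.Adj i j ∧ m = MvPolynomial.X i * MvPolynomial.X j}

/-- The edge set of `G` as a finset. -/
noncomputable def edgeFins (G : SimpleGraph (Fin n)) : Finset (Sym2 (Fin n)) :=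
  letI : Fintype ↥G.edgeSet := Fintype.ofFinite _
  G.edgeFinset

/-- The canonical monomial (exponent vector) generators of the edge ideal of `G`. -/
noncomputable def edgeGens (G : SimpleGraph (Fin n)) : Fin (edgeFins G).card → (Fin n → ℕ) :=
  fun k x => if x ∈ ((edgeFins G).equivFin.symm k : Sym2 (Fin n)) then 1 else 0

/-- The graded Betti numbers `β_{i,j}(I(G))` of the edge ideal of `G` over `K`. -/
noncomputable def gBetti (G : SimpleGraph (Fin n)) (i j : ℕ) : ℕ :=
  betti K (edgeGens G) i j

/-- The projective dimension `pd(I(G))` of the edge ideal of `G` over `K`. -/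
noncomputable def gPd (G : SimpleGraph (Fin n)) : ℕ :=
  sSup {i | ∃ j, gBetti K G i j ≠ 0}

/-- The Green–Lazarsfeld index of the edge ideal of `G` over `K`
(`⊤` iff the ideal has a linear resolution). -/
noncomputable def gIndex (G : SimpleGraph (Fin n)) : ℕ∞ :=
  sInf {N : ℕ∞ | ∃ i j : ℕ, N = (i : ℕ∞) ∧ i + 2 < j ∧ gBetti K G i j ≠ 0}

/-- The regularity of the edge ideal of `G` over `K`. -/
noncomputable def gReg (G : SimpleGraph (Fin n)) : ℕ :=
  sSup {d | ∃ i j, gBetti K G i j ≠ 0 ∧ j = i + d}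

/-- The edge ideal of `G` has a (2-)linear resolution over `K`. -/
def gLinRes (G : SimpleGraph (Fin n)) : Prop :=
  ∀ i j, gBetti K G i j ≠ 0 → j = i + 2

/-- The edge ideal of `G` has almost maximal finite index over `K`:
`index(I(G)) = pd(I(G)) - 1` (with the index finite). -/
def AMFI (G : SimpleGraph (Fin n)) : Prop :=
  gIndex K G + 1 = (gPd K G : ℕ∞)

/-! ## Graph-theoretic notions -/

/-- `H` contains an induced (chordless) cycle of length `l`. -/
def HasInducedCycle {W : Type} (H : SimpleGraph W) (l : ℕ) : Prop :=
  ∃ f : ZMod l → W, Function.Injective f ∧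
    ∀ i j : ZMod l, H.Adj (f i) (f j) ↔ (j = i + 1 ∨ i = j + 1)

/-- `H` is chordal: it has no induced cycle of length greater than `3`. -/
def Chordal {W : Type} (H : SimpleGraph W) : Prop :=
  ∀ l : ℕ, 3 < l → ¬ HasInducedCycle H l

end EP


/-- The graph `G_{(a)_1}`: a cycle `0 - 1 - ⋯ - (t+2) - 0` together with one extra vertex
`t+3` joined only to the vertex `0`. -/
def Ga1 (t : ℕ) : SimpleGraph (Fin (t + 4)) :=
  SimpleGraph.fromRel (fun i j =>
    ((j : ℕ) = (i : ℕ) + 1 ∧ (j : ℕ) ≤ t + 2) ∨ ((i : ℕ) = 0 ∧ (j : ℕ) = t + 2) ∨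
    ((i : ℕ) = 0 ∧ (j : ℕ) = t + 3))

/-!
Both the Taylor strand of squarefree multidegree `W` and the reduced cohomology of the restricted
Stanley–Reisner complex `Δ_W` are read off from one auxiliary simplicial complex, whose faces are
the pairs `S ⊔ U` of a set `S` of generators and a set `U ⊆ W` of variables such that all generators
in `S` are supported on `W \ U`. It has two acyclic subcomplexes, unions of cones whose apices are
variables and generators respectively. Modulo the first one, the faces left over are the sets `S` of
generators with lcm `W`, that is, the Taylor strand; modulo the second one, they are the `U` with
`W \ U ∈ Δ`, which under complementation in `W` give the cochain complex of `Δ_W`. Both relative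
homologies agree with the homology of the whole complex, and this is Hochster's formula.

For the edge ideal of `G`, the complex `Δ_W` consists of the cliques of `Gᶜ` in `W`. If `Gᶜ` has no
triangles, this is a graph; its cohomology in topological degree `1` vanishes exactly when the graph
is a forest, as one sees by integrating cochains along the edges, each of which is a bridge.
-/

namespace EP

section Chains

variable {K : Type} [Field K] {V : Type}

lemma mem_faceSpan {T : Set (Finset V)} {p : ℕ} {c : Finset V →₀ K} :
    c ∈ faceSpan K T p ↔ c ∈ supported K K T ∧ ∀ S, c S ≠ 0 → S.card = p := by
  have faceSpan_eq : faceSpan K T p = supported K K (T ∩ {S | S.card = p}) := by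
    rw [supported_eq_span_single, faceSpan]
    congr 1
    ext c
    simp only [Set.mem_ofPred_eq, Set.mem_image, Set.mem_inter_iff, and_assoc, eq_comm]
  rw [faceSpan_eq, supported_inter, Submodule.mem_inf]
  exact and_congr_right' (by simp only [mem_supported', Set.mem_ofPred_eq, not_imp_comm, ne_eq])

lemma filter_card_mem_faceSpan {T : Set (Finset V)} {c : Finset V →₀ K}
    (hc : c ∈ supported K K T) (p : ℕ) : c.filter (·.card = p) ∈ faceSpan K T p := by
  rw [mem_supported'] at hc
  refine mem_faceSpan.2 ⟨(mem_supported' ..).2 fun S hS ↦ ?_, fun S hS ↦ ?_⟩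
  · rw [filter_apply, hc S hS, ite_self]
  · by_contra h
    exact hS (filter_apply_neg _ _ h)

lemma filter_card_eq_self {T : Set (Finset V)} {p : ℕ} {c : Finset V →₀ K}
    (hc : c ∈ faceSpan K T p) : c.filter (·.card = p) = c :=
  (filter_eq_self_iff _ _).2 (mem_faceSpan.1 hc).2

lemma faceSpan_mono {A B : Set (Finset V)} (h : A ⊆ B) (p : ℕ) :
    faceSpan K A p ≤ faceSpan K B p := fun _ hc ↦
  mem_faceSpan.2 ⟨supported_mono h (mem_faceSpan.1 hc).1, (mem_faceSpan.1 hc).2⟩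

lemma filter_mem_faceSpan {T : Set (Finset V)} {p : ℕ} {c : Finset V →₀ K}
    (hc : c ∈ faceSpan K T p) (P : Finset V → Prop) [DecidablePred P] :
    c.filter P ∈ faceSpan K (T ∩ {S | P S}) p := by
  simp only [mem_faceSpan, mem_supported', filter_apply] at hc ⊢
  grind

lemma exists_add_of_mem_faceSpan {Γ A : Set (Finset V)} {p : ℕ} {c : Finset V →₀ K}
    (hc : c ∈ faceSpan K Γ p) : ∃ a ∈ faceSpan K A p, ∃ b ∈ faceSpan K (Γ \ A) p, a + b = c := by
  classical
  exact ⟨c.filter (· ∈ A), faceSpan_mono Set.inter_subset_right p (filter_mem_faceSpan hc (· ∈ A)),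
    c.filter (· ∉ A), filter_mem_faceSpan hc (· ∉ A), filter_add_filter_not c _⟩

variable [LinearOrder V]

/-- The incidence sign of `x` relative to the oriented face `s`, whether or not `x ∈ s`: it is the
coefficient of `s.erase x` in the boundary of `insert x s`. -/
def faceSign (K : Type) [Field K] (s : Finset V) (x : V) : K :=
  (-1) ^ (s.filter (· < x)).card

lemma faceSign_mul_self (s : Finset V) (x : V) : faceSign K s x * faceSign K s x = 1 := by
  rw [faceSign, ← mul_pow, neg_one_mul, neg_neg, one_pow]

lemma faceSign_insert {s : Finset V} {x : V} (hx : x ∉ s) (y : V) :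
    faceSign K (insert x s) y = if x < y then -faceSign K s y else faceSign K s y := by
  unfold faceSign
  rw [Finset.filter_insert]
  split_ifs with h
  · rw [Finset.card_insert_of_notMem (by simp [hx]), pow_succ, mul_neg_one]
  · rfl

lemma faceSign_insert_self (s : Finset V) (x : V) :
    faceSign K (insert x s) x = faceSign K s x := by
  simp [faceSign, Finset.filter_insert]

lemma faceSign_insert_mul_faceSign_insert {s : Finset V} {x y : V} (hx : x ∉ s) (hy : y ∉ s)
    (hxy : x ≠ y) :
    faceSign K (insert x s) y * faceSign K (insert y s) x = -(faceSign K s x * faceSign K s y) := by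
  rw [faceSign_insert hx, faceSign_insert hy]
  rcases hxy.lt_or_gt with h | h <;> simp [h, h.not_gt, mul_comm]

lemma faceSign_mul_faceSign_insert {s : Finset V} {x y : V} (hx : x ∉ s) (hy : y ∉ s)
    (hxy : x ≠ y) :
    faceSign K s x * faceSign K (insert x s) y = -(faceSign K s y * faceSign K (insert y s) x) := by
  rw [faceSign_insert hx, faceSign_insert hy]
  rcases hxy.lt_or_gt with h | h <;> simp [h, h.not_gt, mul_comm]

lemma bdS_single (S : Finset V) (a : K) : bdS K (single S a) = a • bdFace K S := by
  rw [bdS, lsum_single, LinearMap.toSpanSingleton_apply]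

lemma bdS_apply [Fintype V] (c : Finset V →₀ K) (S : Finset V) :
    bdS K c S = ∑ x ∈ Sᶜ, faceSign K S x * c (insert x S) := by
  have erase_eq_iff (T : Finset V) (x : V) (hx : x ∈ T) :
      T.erase x = S ↔ x ∈ Sᶜ ∧ insert x S = T := by
    rw [Finset.mem_compl]
    constructor
    · rintro rfl
      exact ⟨Finset.notMem_erase x T, Finset.insert_erase hx⟩
    · rintro ⟨hxS, rfl⟩
      exact Finset.erase_insert hxS
  induction c using Finsupp.induction_linear with
  | zero => simp
  | add c d hc hd => simp only [map_add, Finsupp.add_apply, hc, hd, mul_add, Finset.sum_add_distrib]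
  | single T a =>
    simp only [bdS_single, bdFace, Finsupp.smul_apply, finsetSum_apply, single_apply, smul_eq_mul,
      mul_ite, mul_zero, mul_one, Finset.mul_sum]
    rw [← Finset.sum_filter, ← Finset.sum_filter]
    refine Finset.sum_congr ?_ ?_
    · ext x
      simp only [Finset.mem_filter]
      constructor
      · exact fun ⟨hx, h⟩ ↦ ((erase_eq_iff T x hx).1 h).imp_right Eq.symm
      · rintro ⟨hx, rfl⟩
        exact ⟨Finset.mem_insert_self x S,
          (erase_eq_iff _ x (Finset.mem_insert_self x S)).2 ⟨hx, rfl⟩⟩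
    · intro x hx
      rw [← faceSign_insert_self, (Finset.mem_filter.1 hx).2, faceSign, mul_comm]

variable [Finite V]

lemma bdS_bdS (c : Finset V →₀ K) : bdS K (bdS K c) = 0 := by
  cases nonempty_fintype V
  ext S
  simp only [bdS_apply, Finset.mul_sum, Finsupp.zero_apply, ← mul_assoc]
  rw [Finset.sum_sigma']
  have mem_iff (a : Σ _ : V, V) : a ∈ Sᶜ.sigma (fun x ↦ (insert x S)ᶜ) ↔
      a.1 ∉ S ∧ a.2 ∉ S ∧ a.1 ≠ a.2 := by
    simp only [Finset.mem_sigma, Finset.mem_compl, Finset.mem_insert]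
    grind
  refine Finset.sum_involution (fun a _ ↦ ⟨a.2, a.1⟩) (fun ⟨x, y⟩ h ↦ ?_) (fun ⟨x, y⟩ h _ hxy ↦ ?_)
    (fun ⟨x, y⟩ h ↦ ?_) (fun _ _ ↦ rfl)
  · obtain ⟨hx, hy, hxy⟩ := (mem_iff _).1 h
    dsimp only
    rw [faceSign_mul_faceSign_insert hx hy hxy, Finset.insert_comm y x S]
    ring
  · exact ((mem_iff _).1 h).2.2 (Sigma.mk.inj hxy).1.symm
  · obtain ⟨hx, hy, hxy⟩ := (mem_iff _).1 h
    exact (mem_iff _).2 ⟨hy, hx, hxy.symm⟩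

lemma bdS_filter_card (c : Finset V →₀ K) (p : ℕ) :
    bdS K (c.filter (·.card = p)) = (bdS K c).filter (·.card + 1 = p) := by
  cases nonempty_fintype V
  ext S
  simp only [bdS_apply, filter_apply]
  split_ifs with hS
  · refine Finset.sum_congr rfl fun x hx ↦ ?_
    rw [if_pos (by rw [Finset.card_insert_of_notMem (Finset.mem_compl.1 hx), hS])]
  · refine Finset.sum_eq_zero fun x hx ↦ ?_
    rw [if_neg (by rwa [Finset.card_insert_of_notMem (Finset.mem_compl.1 hx)]), mul_zero]

lemma bdS_mem_supported {A : Set (Finset V)} (hA : IsLowerSet A) {c : Finset V →₀ K}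
    (hc : c ∈ supported K K A) : bdS K c ∈ supported K K A := by
  cases nonempty_fintype V
  rw [mem_supported'] at hc ⊢
  intro S hS
  rw [bdS_apply]
  refine Finset.sum_eq_zero fun x _ ↦ ?_
  rw [hc _ fun h ↦ hS (hA (Finset.subset_insert x S) h), mul_zero]

lemma bdS_mem_faceSpan {A : Set (Finset V)} (hA : IsLowerSet A) {p : ℕ} {c : Finset V →₀ K}
    (hc : c ∈ faceSpan K A (p + 1)) : bdS K c ∈ faceSpan K A p := by
  rw [← filter_card_eq_self hc, bdS_filter_card]
  simpa only [add_left_inj] using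
    filter_card_mem_faceSpan (bdS_mem_supported hA (mem_faceSpan.1 hc).1) p

/-- The simplicial complex `A` has no reduced homology over `K`, in any degree. -/
def Acyclic (K : Type) [Field K] (A : Set (Finset V)) : Prop :=
  ∀ c ∈ supported K K A, bdS K c = 0 → ∃ a ∈ supported K K A, bdS K a = c

/-- The cone operator with apex `v`: it joins every face with `v`. -/
noncomputable def coneChain (v : V) (c : Finset V →₀ K) : Finset V →₀ K :=
  Finsupp.equivFunOnFinite.symm fun S ↦ if v ∈ S then faceSign K S v * c (S.erase v) else 0

lemma coneChain_apply (v : V) (c : Finset V →₀ K) (S : Finset V) :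
    coneChain v c S = if v ∈ S then faceSign K S v * c (S.erase v) else 0 := rfl

lemma coneChain_insert {v : V} {U : Finset V} (hv : v ∉ U) (c : Finset V →₀ K) :
    coneChain v c (insert v U) = faceSign K U v * c U := by
  rw [coneChain_apply, if_pos (Finset.mem_insert_self v U), faceSign_insert_self,
    Finset.erase_insert hv]

lemma coneChain_of_notMem {v : V} {S : Finset V} (hv : v ∉ S) (c : Finset V →₀ K) :
    coneChain v c S = 0 := if_neg hv

lemma bdS_coneChain_add_coneChain_bdS (v : V) (c : Finset V →₀ K) :
    bdS K (coneChain v c) + coneChain v (bdS K c) = c := by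
  cases nonempty_fintype V
  ext S
  rw [Finsupp.add_apply, bdS_apply]
  by_cases hvS : v ∈ S
  · obtain ⟨U, hvU, rfl⟩ : ∃ U, v ∉ U ∧ insert v U = S :=
      ⟨S.erase v, Finset.notMem_erase v S, Finset.insert_erase hvS⟩
    have term (x : V) (hx : x ∈ (insert v U)ᶜ) :
        faceSign K (insert v U) x * coneChain v c (insert x (insert v U)) =
          -faceSign K U v * (faceSign K U x * c (insert x U)) := by
      obtain ⟨hxv, hxU⟩ : x ≠ v ∧ x ∉ U := by simpa using hx
      rw [Finset.insert_comm, coneChain_insert (by simp [hxv.symm, hvU]), ← mul_assoc,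
        faceSign_insert_mul_faceSign_insert hvU hxU hxv.symm]
      ring
    rw [Finset.sum_congr rfl term, ← Finset.mul_sum, coneChain_insert hvU, bdS_apply,
      ← Finset.add_sum_erase _ _ (Finset.mem_compl.2 hvU), ← Finset.compl_insert]
    linear_combination c (insert v U) * faceSign_mul_self (K := K) U v
  · rw [Finset.sum_eq_single v, coneChain_insert hvS, coneChain_of_notMem hvS, ← mul_assoc,
      faceSign_mul_self, one_mul, add_zero]
    · intro x _ hxv
      rw [coneChain_of_notMem (by simp [hvS, hxv.symm]), mul_zero]
    · exact fun h ↦ absurd (Finset.mem_compl.2 hvS) h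

lemma acyclic_of_insert_mem {A : Set (Finset V)} (v : V) (hv : ∀ s ∈ A, insert v s ∈ A) :
    Acyclic K A := by
  intro c hc hbd
  rw [mem_supported'] at hc
  refine ⟨coneChain v c, (mem_supported' ..).2 fun S hS ↦ ?_, ?_⟩
  · rw [coneChain_apply]
    split_ifs with hvS
    · rw [hc _ fun h ↦ hS (Finset.insert_erase hvS ▸ hv _ h), mul_zero]
    · rfl
  · have homotopy := bdS_coneChain_add_coneChain_bdS v c
    have cone_zero : coneChain v (0 : Finset V →₀ K) = 0 := by
      ext S
      simp [coneChain_apply]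
    rwa [hbd, cone_zero, add_zero] at homotopy

lemma Acyclic.union {A B : Set (Finset V)} (hA : IsLowerSet A) (hB : IsLowerSet B)
    (acyclicA : Acyclic K A) (acyclicB : Acyclic K B) (acyclicAB : Acyclic K (A ∩ B)) :
    Acyclic K (A ∪ B) := by
  intro c hc hbd
  rw [supported_union] at hc ⊢
  obtain ⟨a, ha, b, hb, rfl⟩ := Submodule.mem_sup.1 hc
  have bd_eq : bdS K a = -bdS K b := by rwa [map_add, add_eq_zero_iff_eq_neg] at hbd
  have bd_mem : bdS K a ∈ supported K K (A ∩ B) := by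
    rw [supported_inter]
    exact ⟨bdS_mem_supported hA ha, bd_eq ▸ neg_mem (bdS_mem_supported hB hb)⟩
  obtain ⟨d, hd, hd_eq⟩ := acyclicAB _ bd_mem (bdS_bdS a)
  rw [supported_inter] at hd
  obtain ⟨a', ha', ha'_eq⟩ := acyclicA (a - d) (sub_mem ha hd.1) (by rw [map_sub, hd_eq, sub_self])
  obtain ⟨b', hb', hb'_eq⟩ := acyclicB (b + d) (add_mem hb hd.2)
    (by rw [map_add, hd_eq, bd_eq, add_neg_cancel])
  refine ⟨a' + b', Submodule.add_mem_sup ha' hb', ?_⟩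
  rw [map_add, ha'_eq, hb'_eq]
  abel

lemma acyclic_inter_biUnion {ι : Type} (A : ι → Set (Finset V)) (v : ι → V)
    (hA : ∀ i, IsLowerSet (A i)) (I : Finset ι)
    (hI : ∀ i ∈ I, ∀ j ∈ I, ∀ s ∈ A i, s ∈ A j → insert (v i) s ∈ A j) {B : Set (Finset V)}
    (hB : IsLowerSet B) (hBI : ∀ i ∈ I, ∀ s ∈ B, s ∈ A i → insert (v i) s ∈ B) :
    Acyclic K (B ∩ ⋃ i ∈ I, A i) := by
  classical
  -- Every `B ∩ A i` is a cone with apex `v i`; Mayer–Vietoris splits off one cone at a time.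
  induction I using Finset.induction_on generalizing B with
  | empty =>
    intro c hc _
    have hc0 : c = 0 := by simpa using hc
    exact ⟨0, zero_mem _, by rw [map_zero, hc0]⟩
  | insert j I _ ih =>
    rw [Finset.set_biUnion_insert, Set.inter_union_distrib_left]
    have hI' : ∀ i ∈ I, ∀ k ∈ I, ∀ s ∈ A i, s ∈ A k → insert (v i) s ∈ A k := fun i hi k hk ↦
      hI i (Finset.mem_insert_of_mem hi) k (Finset.mem_insert_of_mem hk)
    have hjI := Finset.mem_insert_self j I
    refine Acyclic.union (hB.inter (hA j))
      (hB.inter (isLowerSet_iUnion₂ fun i _ ↦ hA i)) ?_ ?_ ?_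
    · exact acyclic_of_insert_mem (v j) fun s hs ↦
        ⟨hBI j hjI s hs.1 hs.2, hI j hjI j hjI s hs.2 hs.2⟩
    · exact ih hI' hB fun i hi ↦ hBI i (Finset.mem_insert_of_mem hi)
    · rw [← Set.inter_inter_distrib_left, ← Set.inter_assoc]
      exact ih hI' (hB.inter (hA j)) fun i hi s hs hsi ↦
        ⟨hBI i (Finset.mem_insert_of_mem hi) s hs.1 hsi,
          hI i (Finset.mem_insert_of_mem hi) j hjI s hsi hs.2⟩

/-- Exactness in degree `p` of the quotient of the chain complex on all faces by those outside `T`.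
When `T = Γ \ A` for simplicial complexes `A ⊆ Γ`, this is the vanishing of the relative homology of
`(Γ, A)` in cardinality `p`. -/
def ExactOn (K : Type) [Field K] (T : Set (Finset V)) (p : ℕ) : Prop :=
  ∀ c ∈ faceSpan K T p, (∀ S ∈ T, bdS K c S = 0) →
    ∃ w ∈ faceSpan K T (p + 1), ∀ S ∈ T, bdS K w S = c S

lemma Acyclic.exists_bdS_eq {A : Set (Finset V)} (hA : Acyclic K A) {p : ℕ} {c : Finset V →₀ K}
    (hc : c ∈ faceSpan K A p) (hbd : bdS K c = 0) :
    ∃ a ∈ faceSpan K A (p + 1), bdS K a = c := by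
  obtain ⟨a, ha, rfl⟩ := hA c (mem_faceSpan.1 hc).1 hbd
  refine ⟨_, filter_card_mem_faceSpan ha (p + 1), ?_⟩
  simpa only [bdS_filter_card, add_left_inj] using filter_card_eq_self hc

lemma Acyclic.exists_bdS_eq_bdS {A T : Set (Finset V)} (hA : Acyclic K A) {p : ℕ}
    {c : Finset V →₀ K} (hc : c ∈ faceSpan K T p) (hbd : bdS K c ∈ supported K K A) :
    ∃ a ∈ faceSpan K A p, bdS K a = bdS K c := by
  obtain ⟨a, ha, ha_eq⟩ := hA _ hbd (bdS_bdS c)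
  exact ⟨_, filter_card_mem_faceSpan ha p,
    by rw [bdS_filter_card, ha_eq, ← bdS_filter_card, filter_card_eq_self hc]⟩

lemma bdS_apply_eq_zero {A : Set (Finset V)} (hA : IsLowerSet A) {p : ℕ} {c : Finset V →₀ K}
    (hc : c ∈ faceSpan K A p) {S : Finset V} (hS : S ∉ A) : bdS K c S = 0 :=
  (mem_supported' ..).1 (bdS_mem_supported hA (mem_faceSpan.1 hc).1) S hS

lemma ExactOn.of_diff {Γ A : Set (Finset V)} (hΓ : IsLowerSet Γ) (hA : IsLowerSet A) (hAΓ : A ⊆ Γ)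
    (acyclicA : Acyclic K A) {p : ℕ} (exact_diff : ExactOn K (Γ \ A) p) : ExactOn K Γ p := by
  intro c hc hbd
  have cycle : bdS K c = 0 := by
    ext S
    by_cases hS : S ∈ Γ
    · exact hbd S hS
    · exact bdS_apply_eq_zero hΓ hc hS
  obtain ⟨a, ha, b, hb, rfl⟩ := exists_add_of_mem_faceSpan (A := A) hc
  obtain ⟨w, hw, hwb⟩ := exact_diff b hb fun S hS ↦ by
    simpa [bdS_apply_eq_zero hA ha hS.2] using DFunLike.congr_fun cycle S
  have hwΓ := faceSpan_mono Set.sdiff_subset _ hw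
  have rest_mem : a + b - bdS K w ∈ faceSpan K A p := by
    have memΓ := mem_faceSpan.1 (sub_mem hc (bdS_mem_faceSpan hΓ hwΓ))
    refine mem_faceSpan.2 ⟨(mem_supported' ..).2 fun S hS ↦ ?_, memΓ.2⟩
    by_cases hSΓ : S ∈ Γ
    · have a_eq : a S = 0 := (mem_supported' ..).1 (mem_faceSpan.1 ha).1 S hS
      rw [Finsupp.sub_apply, Finsupp.add_apply, a_eq, hwb S ⟨hSΓ, hS⟩, zero_add, sub_self]
    · exact (mem_supported' ..).1 memΓ.1 S hSΓ
  obtain ⟨d, hd, hd_eq⟩ := acyclicA.exists_bdS_eq rest_mem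
    (by rw [map_sub, bdS_bdS, cycle, sub_zero])
  refine ⟨w + d, add_mem hwΓ (faceSpan_mono hAΓ _ hd), fun S _ ↦ ?_⟩
  rw [map_add, hd_eq, add_sub_cancel]

lemma ExactOn.diff {Γ A : Set (Finset V)} (hΓ : IsLowerSet Γ) (hA : IsLowerSet A) (hAΓ : A ⊆ Γ)
    (acyclicA : Acyclic K A) {p : ℕ} (exactΓ : ExactOn K Γ p) : ExactOn K (Γ \ A) p := by
  intro c hc hbd
  have hcΓ : c ∈ faceSpan K Γ p := faceSpan_mono Set.sdiff_subset _ hc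
  have bd_mem : bdS K c ∈ supported K K A := (mem_supported' ..).2 fun S hS ↦ by
    by_cases hSΓ : S ∈ Γ
    · exact hbd S ⟨hSΓ, hS⟩
    · exact bdS_apply_eq_zero hΓ hcΓ hSΓ
  obtain ⟨a, ha, ha_eq⟩ := acyclicA.exists_bdS_eq_bdS hc bd_mem
  obtain ⟨w, hw, hw_eq⟩ := exactΓ (c - a) (sub_mem hcΓ (faceSpan_mono hAΓ _ ha))
    fun S _ ↦ by rw [map_sub, ha_eq, sub_self, Finsupp.zero_apply]
  obtain ⟨d, hd, w', hw', rfl⟩ := exists_add_of_mem_faceSpan (A := A) hw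
  refine ⟨w', hw', fun S hS ↦ ?_⟩
  have a_eq : a S = 0 := (mem_supported' ..).1 (mem_faceSpan.1 ha).1 S hS.2
  simpa [bdS_apply_eq_zero hA hd hS.2, a_eq] using hw_eq S hS.1

lemma exactOn_diff_iff {Γ A : Set (Finset V)} (hΓ : IsLowerSet Γ) (hA : IsLowerSet A) (hAΓ : A ⊆ Γ)
    (acyclicA : Acyclic K A) (p : ℕ) : ExactOn K (Γ \ A) p ↔ ExactOn K Γ p :=
  ⟨.of_diff hΓ hA hAΓ acyclicA, .diff hΓ hA hAΓ acyclicA⟩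

end Chains

section Transport

variable {K : Type} [Field K] {U X : Type}

lemma faceSpan_map_image (f : U ↪ X) (T : Set (Finset U)) (p : ℕ) :
    faceSpan K (Finset.map f '' T) p =
      (faceSpan K T p).map (lmapDomain K K (Finset.map f)) := by
  rw [faceSpan, faceSpan, Submodule.map_span]
  congr 1
  ext c
  simp only [Set.mem_image, Set.mem_ofPred_eq]
  constructor
  · rintro ⟨_, ⟨F, hF, rfl⟩, hp, rfl⟩
    exact ⟨_, ⟨F, hF, by rwa [Finset.card_map] at hp, rfl⟩, mapDomain_single⟩
  · rintro ⟨_, ⟨F, hF, hp, rfl⟩, rfl⟩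
    exact ⟨_, ⟨F, hF, rfl⟩, by rwa [Finset.card_map], mapDomain_single⟩

variable [LinearOrder U] [LinearOrder X]

lemma bdFace_map (φ : U ↪o X) (S : Finset U) :
    bdFace K (S.map φ.toEmbedding) = mapDomain (Finset.map φ.toEmbedding) (bdFace K S) := by
  simp only [bdFace, Finset.sum_map, mapDomain_finsetSum, mapDomain_smul, mapDomain_single,
    Finset.filter_map, Finset.card_map, Finset.map_erase]
  congr! 4
  ext
  simp

lemma bdS_mapDomain (φ : U ↪o X) (c : Finset U →₀ K) :
    bdS K (mapDomain (Finset.map φ.toEmbedding) c) =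
      mapDomain (Finset.map φ.toEmbedding) (bdS K c) := by
  induction c using Finsupp.induction_linear with
  | zero => simp
  | add c d hc hd => simp only [mapDomain_add, map_add, hc, hd]
  | single S a => rw [mapDomain_single, bdS_single, bdS_single, mapDomain_smul, bdFace_map]

lemma exactOn_map_image_iff (φ : U ↪o X) (T : Set (Finset U)) (p : ℕ) :
    ExactOn K (Finset.map φ.toEmbedding '' T) p ↔ ExactOn K T p := by
  have apply_map (c : Finset U →₀ K) (S : Finset U) :
      mapDomain (Finset.map φ.toEmbedding) c (S.map φ.toEmbedding) = c S :=
    mapDomain_apply (Finset.map_injective _) c S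
  simp only [ExactOn, faceSpan_map_image, Submodule.mem_map, forall_exists_index, and_imp,
    forall_apply_eq_imp_iff₂, exists_exists_and_eq_and, Set.forall_mem_image, lmapDomain_apply,
    bdS_mapDomain, apply_map]

end Transport

section PairComplex

instance finite_sumLex {α β : Type*} [Finite α] [Finite β] : Finite (α ⊕ₗ β) :=
  inferInstanceAs (Finite (α ⊕ β))

variable {K : Type} [Field K] {ι V : Type} [LinearOrder ι] [LinearOrder V]

/-- The inclusion of the generator indices into the vertex set `ι ⊕ₗ V` of the pair complex. -/
def genVertex : ι ↪o ι ⊕ₗ V := OrderEmbedding.ofStrictMono Sum.inlₗ Sum.Lex.inl_strictMono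

/-- The inclusion of the variables into the vertex set `ι ⊕ₗ V` of the pair complex. -/
def varVertex : V ↪o ι ⊕ₗ V := OrderEmbedding.ofStrictMono Sum.inrₗ Sum.Lex.inr_strictMono

lemma forall_vertex {P : ι ⊕ₗ V → Prop} :
    (∀ y, P y) ↔ (∀ k, P (genVertex k)) ∧ ∀ x, P (varVertex x) := Sum.forall

@[simp]
lemma varVertex_ne_genVertex (x : V) (k : ι) : (varVertex x : ι ⊕ₗ V) ≠ genVertex k :=
  Sum.inr_ne_inl

@[simp]
lemma genVertex_ne_varVertex (k : ι) (x : V) : (genVertex k : ι ⊕ₗ V) ≠ varVertex x :=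
  Sum.inl_ne_inr

lemma exists_map_eq_of_forall_mem_range {U X : Type} (f : U ↪ X) {s : Finset X}
    (hs : ∀ y ∈ s, y ∈ Set.range f) : ∃ S : Finset U, S.map f = s := by
  refine ⟨s.preimage f f.injective.injOn, ?_⟩
  ext y
  simp only [Finset.mem_map, Finset.mem_preimage]
  grind

/-- The simplicial complex on generators and variables whose faces `S ⊔ U` satisfy
`U ⊆ W` and `e k ⊆ W \ U` for all `k ∈ S`. -/
def pairComplex (e : ι → Finset V) (W : Finset V) : Set (Finset (ι ⊕ₗ V)) :=
  {s | (∀ x, varVertex x ∈ s → x ∈ W) ∧ ∀ k, genVertex k ∈ s → ∀ x ∈ e k, x ∈ W ∧ varVertex x ∉ s}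

/-- The faces `S ⊔ U` of the pair complex such that the generators in `S` do not cover `W`. -/
def pairComplexNotCovering (e : ι → Finset V) (W : Finset V) : Set (Finset (ι ⊕ₗ V)) :=
  pairComplex e W ∩ ⋃ x ∈ W, {s | ∀ k, genVertex k ∈ s → x ∉ e k}

/-- The faces `S ⊔ U` of the pair complex such that `W \ U` contains some `e k`. -/
def pairComplexContaining (e : ι → Finset V) (W : Finset V) : Set (Finset (ι ⊕ₗ V)) :=
  pairComplex e W ∩ ⋃ k, {s | ∀ x ∈ e k, x ∈ W ∧ varVertex x ∉ s}

variable (e : ι → Finset V) (W : Finset V)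

lemma isLowerSet_pairComplex : IsLowerSet (pairComplex e W) := fun _ _ hst hs ↦
  ⟨fun x hx ↦ hs.1 x (hst hx), fun k hk x hx ↦ (hs.2 k (hst hk) x hx).imp_right (mt (@hst _))⟩

lemma isLowerSet_setOf_notMem (x : V) :
    IsLowerSet {s : Finset (ι ⊕ₗ V) | ∀ k, genVertex k ∈ s → x ∉ e k} :=
  fun _ _ hst hs k hk ↦ hs k (hst hk)

lemma isLowerSet_setOf_subset_sdiff (k : ι) :
    IsLowerSet {s : Finset (ι ⊕ₗ V) | ∀ x ∈ e k, x ∈ W ∧ varVertex x ∉ s} :=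
  fun _ _ hst hs x hx ↦ (hs x hx).imp_right (mt (@hst _))

lemma isLowerSet_pairComplexNotCovering : IsLowerSet (pairComplexNotCovering e W) :=
  (isLowerSet_pairComplex e W).inter (isLowerSet_iUnion₂ fun x _ ↦ isLowerSet_setOf_notMem e x)

lemma isLowerSet_pairComplexContaining : IsLowerSet (pairComplexContaining e W) :=
  (isLowerSet_pairComplex e W).inter (isLowerSet_iUnion (isLowerSet_setOf_subset_sdiff e W))

lemma pairComplex_diff_notCovering :
    pairComplex e W \ pairComplexNotCovering e W =
      Finset.map genVertex.toEmbedding '' {S : Finset ι | S.biUnion e = W} := by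
  ext s
  constructor
  · rintro ⟨hs, hs'⟩
    have covering (x : V) (hx : x ∈ W) : ∃ k, genVertex k ∈ s ∧ x ∈ e k := by
      by_contra! h
      exact hs' ⟨hs, Set.mem_biUnion hx h⟩
    have no_var (x : V) : varVertex x ∉ s := fun hx ↦ by
      obtain ⟨k, hk, hxk⟩ := covering x (hs.1 x hx)
      exact (hs.2 k hk x hxk).2 hx
    obtain ⟨S, rfl⟩ := exists_map_eq_of_forall_mem_range genVertex.toEmbedding (s := s)
      (forall_vertex.2 ⟨fun k _ ↦ ⟨k, rfl⟩, fun x hx ↦ absurd hx (no_var x)⟩)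
    refine ⟨S, Finset.Subset.antisymm (Finset.biUnion_subset.2 fun k hk x hx ↦ ?_)
      fun x hx ↦ ?_, rfl⟩
    · exact (hs.2 k (Finset.mem_map_of_mem _ hk) x hx).1
    · simpa using covering x hx
  · rintro ⟨S, rfl, rfl⟩
    refine ⟨⟨by simp, fun k hk x hx ↦ ⟨?_, by simp⟩⟩, fun h ↦ ?_⟩
    · exact Finset.mem_biUnion.2 ⟨k, by simpa using hk, hx⟩
    · obtain ⟨k, hk, x, hx, not_covered⟩ : ∃ k ∈ S, ∃ x ∈ e k, ∀ l ∈ S, x ∉ e l := by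
        simpa using h.2
      exact not_covered k hk hx

lemma pairComplex_diff_containing :
    pairComplex e W \ pairComplexContaining e W =
      Finset.map varVertex.toEmbedding '' {U : Finset V | U ⊆ W ∧ ∀ k, ¬e k ⊆ W \ U} := by
  ext s
  constructor
  · rintro ⟨hs, hs'⟩
    have no_gen (k : ι) : genVertex k ∉ s := fun hk ↦ hs' ⟨hs, Set.mem_iUnion_of_mem k (hs.2 k hk)⟩
    obtain ⟨U, rfl⟩ := exists_map_eq_of_forall_mem_range varVertex.toEmbedding (s := s)
      (forall_vertex.2 ⟨fun k hk ↦ absurd hk (no_gen k), fun x _ ↦ ⟨x, rfl⟩⟩)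
    refine ⟨U, ⟨fun x hx ↦ hs.1 x (Finset.mem_map_of_mem _ hx), fun k hk ↦ hs' ⟨hs, ?_⟩⟩, rfl⟩
    exact Set.mem_iUnion_of_mem k fun x hx ↦ by simpa using hk hx
  · rintro ⟨U, ⟨hUW, hU⟩, rfl⟩
    refine ⟨⟨fun x hx ↦ hUW (by simpa using hx), by simp⟩, fun ⟨_, h⟩ ↦ ?_⟩
    obtain ⟨k, hk⟩ := Set.mem_iUnion.1 h
    exact hU k fun x hx ↦ by simpa using hk x hx

variable [Finite ι] [Finite V]

lemma acyclic_pairComplexNotCovering : Acyclic K (pairComplexNotCovering e W) := by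
  refine acyclic_inter_biUnion _ varVertex (isLowerSet_setOf_notMem e) W
    (fun x _ y _ s _ hy k hk ↦ hy k ?_) (isLowerSet_pairComplex e W) fun x hxW s hs hx ↦ ⟨?_, ?_⟩
  · simpa using hk
  · intro y hy
    obtain rfl | hys : y = x ∨ varVertex y ∈ s := by simpa using hy
    exacts [hxW, hs.1 y hys]
  · intro k hk y hy
    have hks : genVertex k ∈ s := by simpa using hk
    have hyx : y ≠ x := fun h ↦ hx k hks (h ▸ hy)
    simpa [hyx] using hs.2 k hks y hy

lemma acyclic_pairComplexContaining : Acyclic K (pairComplexContaining e W) := by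
  cases nonempty_fintype ι
  rw [pairComplexContaining, ← Set.biUnion_univ, ← Finset.coe_univ]
  refine acyclic_inter_biUnion _ genVertex (isLowerSet_setOf_subset_sdiff e W) Finset.univ
    (fun k _ l _ s _ hl x hx ↦ ?_) (isLowerSet_pairComplex e W) fun k _ s hs hk ↦ ⟨?_, ?_⟩
  · simpa using hl x hx
  · exact fun x hx ↦ hs.1 x (by simpa using hx)
  · intro l hl x hx
    obtain rfl | hls : l = k ∨ genVertex l ∈ s := by simpa using hl
    exacts [by simpa using hk x hx, by simpa using hs.2 l hls x hx]

lemma exactOn_covering_iff (p : ℕ) :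
    ExactOn K {S : Finset ι | S.biUnion e = W} p ↔
      ExactOn K {U : Finset V | U ⊆ W ∧ ∀ k, ¬e k ⊆ W \ U} p := by
  have excise {A : Set (Finset (ι ⊕ₗ V))} (hA : IsLowerSet A) (hAΓ : A ⊆ pairComplex e W)
      (acyclicA : Acyclic K A) := exactOn_diff_iff (isLowerSet_pairComplex e W) hA hAΓ acyclicA p
  rw [← exactOn_map_image_iff (genVertex (V := V)), ← pairComplex_diff_notCovering,
    ← exactOn_map_image_iff (varVertex (ι := ι)) {U | _}, ← pairComplex_diff_containing,
    excise (isLowerSet_pairComplexNotCovering e W) Set.inter_subset_left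
      (acyclic_pairComplexNotCovering e W),
    excise (isLowerSet_pairComplexContaining e W) Set.inter_subset_left
      (acyclic_pairComplexContaining e W)]

end PairComplex

section Taylor

variable {K : Type} [Field K] {n r : ℕ}

lemma strand_eq_faceSpan (g : Fin r → Fin n → ℕ) (p j : ℕ) :
    strand K g p j = faceSpan K {S | ∑ x, mlcm g S x = j} p := by
  rw [strand, faceSpan]
  congr 1
  ext c
  exact exists_congr fun S ↦ and_left_comm

lemma bdT_single_apply (g : Fin r → Fin n → ℕ) (T S : Finset (Fin r)) (a : K) :
    bdT K g (single T a) S = if mlcm g T = mlcm g S then bdS K (single T a) S else 0 := by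
  simp only [bdT, bdS_single, lsum_single, LinearMap.toSpanSingleton_apply, bdFace,
    Finsupp.smul_apply, finsetSum_apply, smul_eq_mul]
  have ite_sum (f : Fin r → K) : (if mlcm g T = mlcm g S then ∑ k ∈ T, f k else 0) =
      ∑ k ∈ T, if mlcm g T = mlcm g S then f k else 0 := by
    rw [Finset.sum_ite_irrel, Finset.sum_const_zero]
  rw [← mul_ite_zero, ite_sum]
  refine congr_arg (a * ·) (Finset.sum_congr rfl fun k _ ↦ ?_)
  by_cases hS : T.erase k = S
  · subst hS
    simp only [eq_comm (a := mlcm g (T.erase k))]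
    split_ifs <;> simp
  · split_ifs <;> simp [hS]

lemma bdT_apply (g : Fin r → Fin n → ℕ) (c : Finset (Fin r) →₀ K) (S : Finset (Fin r)) :
    bdT K g c S = bdS K (c.filter fun T ↦ mlcm g T = mlcm g S) S := by
  induction c using Finsupp.induction_linear with
  | zero => simp [filter_zero]
  | add c d hc hd => simp only [map_add, Finsupp.add_apply, filter_add, hc, hd]
  | single T a =>
    rw [bdT_single_apply]
    split_ifs with h
    · rw [filter_single_of_pos (fun T ↦ mlcm g T = mlcm g S) h]
    · rw [filter_single_of_neg (fun T ↦ mlcm g T = mlcm g S) h, map_zero,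
        Finsupp.zero_apply]

lemma torRank_eq_zero_iff_exists_bdT_eq (g : Fin r → Fin n → ℕ) (p j : ℕ) :
    torRank K g p j = 0 ↔ ∀ c ∈ strand K g p j, bdT K g c = 0 →
      ∃ w ∈ strand K g (p + 1) j, bdT K g w = c := by
  let cycles := strand K g p j ⊓ LinearMap.ker (bdT K g)
  let boundaries := (strand K g (p + 1) j).map (bdT K g)
  have le_iff : torRank K g p j = 0 ↔ cycles ≤ boundaries := by
    rw [← inf_eq_right, torRank, Nat.sub_eq_zero_iff_le]
    exact ⟨Submodule.eq_of_le_of_finrank_le inf_le_right,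
      fun h ↦ (congr_arg (fun M : Submodule K _ ↦ Module.finrank K M) h).ge⟩
  rw [le_iff]
  exact ⟨fun h c hc hbd ↦ h ⟨hc, hbd⟩, fun h c hc ↦ h c hc.1 hc.2⟩

lemma ExactOn.of_torRank_eq_zero {g : Fin r → Fin n → ℕ} {p : ℕ} {a : Fin n → ℕ}
    (h : torRank K g p (∑ x, a x) = 0) : ExactOn K {S | mlcm g S = a} p := by
  rw [torRank_eq_zero_iff_exists_bdT_eq, strand_eq_faceSpan, strand_eq_faceSpan] at h
  intro c hc hbd
  have filter_eq (b : Fin n → ℕ) : c.filter (fun T ↦ mlcm g T = b) = if b = a then c else 0 := by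
    have c_eq_zero (S) (hS : mlcm g S ≠ a) : c S = 0 :=
      (mem_supported' ..).1 (mem_faceSpan.1 hc).1 S hS
    ext S
    rw [filter_apply]
    split_ifs <;> grind
  have cycle : bdT K g c = 0 := by
    ext S
    rw [bdT_apply, filter_eq]
    split_ifs with hS
    exacts [hbd S hS, by rw [map_zero]]
  obtain ⟨w, hw, hwc⟩ := h c (faceSpan_mono (fun S hS ↦ by rw [Set.mem_ofPred_eq, hS]) p hc) cycle
  refine ⟨w.filter (mlcm g · = a),
    faceSpan_mono Set.inter_subset_right _ (filter_mem_faceSpan hw _), ?_⟩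
  rintro S rfl
  rw [← bdT_apply, hwc]

lemma torRank_eq_zero_of_exactOn {g : Fin r → Fin n → ℕ} {p j : ℕ}
    (h : ∀ a : Fin n → ℕ, ∑ x, a x = j → ExactOn K {S | mlcm g S = a} p) :
    torRank K g p j = 0 := by
  rw [torRank_eq_zero_iff_exists_bdT_eq, strand_eq_faceSpan, strand_eq_faceSpan]
  intro c hc cycle
  have exists_primitive (a : Fin n → ℕ) :
      ∃ w ∈ faceSpan K {S | mlcm g S = a ∧ ∑ x, a x = j} (p + 1),
        ∀ S, mlcm g S = a → bdS K w S = c S := by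
    by_cases ha : ∑ x, a x = j
    · simp only [ha, and_true]
      obtain ⟨w, hw, hwc⟩ := h a ha _
        (faceSpan_mono Set.inter_subset_right _ (filter_mem_faceSpan hc (mlcm g · = a)))
        fun S hS ↦ by rw [← hS, ← bdT_apply, cycle, Finsupp.zero_apply]
      refine ⟨w, hw, fun S hS ↦ ?_⟩
      rw [hwc S hS, filter_apply, if_pos hS]
    · refine ⟨0, zero_mem _, fun S hS ↦ ?_⟩
      subst hS
      rw [map_zero, Finsupp.zero_apply, (mem_supported' ..).1 (mem_faceSpan.1 hc).1 S ha]
  choose w hw hwc using exists_primitive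
  simp only [mem_faceSpan, mem_supported'] at hw
  refine ⟨equivFunOnFinite.symm fun S ↦ w (mlcm g S) S, ?_, ?_⟩
  · simp only [mem_faceSpan, mem_supported', equivFunOnFinite_symm_apply_apply]
    exact ⟨fun S hS ↦ (hw _).1 S fun h ↦ hS h.2, fun S ↦ (hw _).2 S⟩
  · ext S
    rw [bdT_apply, ← hwc _ S rfl]
    congr 2
    ext T
    rw [filter_apply, equivFunOnFinite_symm_apply_apply]
    split_ifs with hT
    · rw [hT]
    · exact ((hw _).1 T fun h ↦ hT h.1).symm

/-- The exponent vectors of the squarefree monomials with supports `e k`. -/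
def squarefreeGens (e : Fin r → Finset (Fin n)) : Fin r → Fin n → ℕ :=
  fun k x ↦ if x ∈ e k then 1 else 0

lemma mlcm_squarefreeGens (e : Fin r → Finset (Fin n)) (S : Finset (Fin r)) :
    mlcm (squarefreeGens e) S = fun x ↦ if x ∈ S.biUnion e then 1 else 0 := by
  funext x
  apply le_antisymm
  · refine Finset.sup_le fun k hk ↦ ?_
    grind [squarefreeGens]
  · split_ifs with hx
    · obtain ⟨k, hk, hxk⟩ := Finset.mem_biUnion.1 hx
      exact (if_pos hxk).ge.trans (Finset.le_sup (f := fun k ↦ squarefreeGens e k x) hk)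
    · exact Nat.zero_le _

lemma torRank_squarefreeGens_eq_zero_iff (e : Fin r → Finset (Fin n)) (p j : ℕ) :
    torRank K (squarefreeGens e) p j = 0 ↔
      ∀ W : Finset (Fin n), W.card = j → ExactOn K {S | S.biUnion e = W} p := by
  have strand_eq (W : Finset (Fin n)) :
      {S | mlcm (squarefreeGens e) S = fun x ↦ if x ∈ W then 1 else 0} = {S | S.biUnion e = W} := by
    ext S
    simp only [mlcm_squarefreeGens, Set.mem_ofPred_eq, funext_iff, Finset.ext_iff]
    refine forall_congr' fun x ↦ ?_
    split_ifs <;> simp [*]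
  have degree_eq (W : Finset (Fin n)) : ∑ x, (if x ∈ W then 1 else 0) = W.card := by simp
  constructor
  · rintro h W rfl
    rw [← strand_eq]
    exact ExactOn.of_torRank_eq_zero (degree_eq W ▸ h)
  · refine fun h ↦ torRank_eq_zero_of_exactOn fun a ha ↦ ?_
    by_cases h_occurs : ∃ S, mlcm (squarefreeGens e) S = a
    · obtain ⟨S, rfl⟩ := h_occurs
      rw [mlcm_squarefreeGens] at ha ⊢
      rw [strand_eq]
      exact h _ (degree_eq _ ▸ ha)
    · intro c _ _
      exact ⟨0, zero_mem _, fun S hS ↦ absurd ⟨S, hS⟩ h_occurs⟩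

end Taylor

section Cohomology

variable {K : Type} [Field K] {V : Type} [LinearOrder V]

/-- The augmented simplicial coboundary of the cochain `f` on all finsets of vertices. -/
def coboundary (f : Finset V → K) (F : Finset V) : K :=
  ∑ x ∈ F, faceSign K F x * f (F.erase x)

/-- The reduced simplicial cohomology of `Δ` over `K` vanishes in the degree of the faces with `q`
vertices, that is, in topological degree `q - 1`. A cochain is any function on finsets, of which
only the values on the faces of `Δ` matter. -/
def CohomologyVanishes (K : Type) [Field K] (Δ : Set (Finset V)) (q : ℕ) : Prop :=
  ∀ f : Finset V → K, (∀ F ∈ Δ, F.card = q + 1 → coboundary f F = 0) →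
    ∃ g : Finset V → K, ∀ F ∈ Δ, F.card = q → f F = coboundary g F

lemma coboundary_congr {f g : Finset V → K} {F : Finset V}
    (h : ∀ x ∈ F, f (F.erase x) = g (F.erase x)) : coboundary f F = coboundary g F :=
  Finset.sum_congr rfl fun x hx ↦ by rw [h x hx]

lemma faceSign_mul_faceSign_sdiff {F W : Finset V} (hF : F ⊆ W) (x : V) :
    faceSign K F x * faceSign K (W \ F) x = faceSign K W x := by
  rw [faceSign, faceSign, faceSign, ← pow_add, ← Finset.card_union_of_disjoint
    (Finset.disjoint_filter_filter Finset.disjoint_sdiff), ← Finset.filter_union,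
    Finset.union_sdiff_of_subset hF]

/-- The sign that turns the boundary into the coboundary when the subset `F` of `W` is replaced by
its complement in `W`. -/
def complementSign (K : Type) [Field K] (W F : Finset V) : K := ∏ x ∈ F, faceSign K W x

lemma complementSign_mul_self (W F : Finset V) :
    complementSign K W F * complementSign K W F = 1 := by
  rw [complementSign, ← Finset.prod_mul_distrib]
  exact Finset.prod_eq_one fun x _ ↦ faceSign_mul_self W x

/-- The cochain on subsets of `W` corresponding to `c` under complementation in `W`. -/
def dualCochain (W : Finset V) (c : Finset V → K) (F : Finset V) : K :=
  complementSign K W F * c (W \ F)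

lemma forall_subset_sdiff_mem_iff {Δ : Set (Finset V)} {W : Finset V} {P : Finset V → Prop} :
    (∀ U ∈ {U | U ⊆ W ∧ W \ U ∈ Δ}, P U) ↔ ∀ F ∈ restrictComplex Δ W, P (W \ F) := by
  constructor
  · exact fun h F hF ↦
      h _ ⟨Finset.sdiff_subset, (Finset.sdiff_sdiff_eq_self hF.2).symm ▸ hF.1⟩
  · exact fun h U hU ↦ Finset.sdiff_sdiff_eq_self hU.1 ▸ h _ ⟨hU.2, Finset.sdiff_subset⟩

variable [Finite V]

lemma bdS_sdiff {W F : Finset V} (hF : F ⊆ W) {c : Finset V →₀ K} (hc : ∀ U, ¬U ⊆ W → c U = 0) :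
    bdS K c (W \ F) = complementSign K W F * coboundary (dualCochain W c) F := by
  cases nonempty_fintype V
  have restrict_sum : bdS K c (W \ F) =
      ∑ x ∈ F, faceSign K (W \ F) x * c (insert x (W \ F)) := by
    rw [bdS_apply]
    refine (Finset.sum_subset (fun x hx ↦ by simp [hx]) fun x hx hxF ↦ ?_).symm
    rw [hc _ (by grind [Finset.mem_compl]), mul_zero]
  rw [restrict_sum, coboundary, Finset.mul_sum]
  refine Finset.sum_congr rfl fun x hx ↦ ?_
  have sign_eq : faceSign K (W \ F) x =
      complementSign K W F * (faceSign K F x * complementSign K W (F.erase x)) := by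
    rw [complementSign, ← Finset.mul_prod_erase F _ hx, ← complementSign,
      ← faceSign_mul_faceSign_sdiff hF]
    linear_combination -faceSign K (W \ F) x * complementSign_mul_self (K := K) W (F.erase x)
      - faceSign K (W \ F) x * complementSign K W (F.erase x) ^ 2 * faceSign_mul_self (K := K) F x
  rw [dualCochain, Finset.sdiff_erase (hF hx), sign_eq]
  ring

lemma exists_dualCochain_eq (Δ : Set (Finset V)) (W : Finset V) (f : Finset V → K) (p : ℕ) :
    ∃ c ∈ faceSpan K {U | U ⊆ W ∧ W \ U ∈ Δ} p,
      ∀ F ∈ restrictComplex Δ W, F.card + p = W.card → dualCochain W c F = f F := by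
  classical
  refine ⟨equivFunOnFinite.symm fun U ↦ if U ⊆ W ∧ W \ U ∈ Δ ∧ U.card = p then
    complementSign K W (W \ U) * f (W \ U) else 0, ?_, fun F ⟨hFΔ, hFW⟩ hp ↦ ?_⟩
  · simp only [mem_faceSpan, mem_supported', equivFunOnFinite_symm_apply_apply]
    grind
  · have card_sdiff : (W \ F).card = p := by rw [Finset.card_sdiff_of_subset hFW]; omega
    rw [dualCochain, equivFunOnFinite_symm_apply_apply, Finset.sdiff_sdiff_eq_self hFW,
      if_pos ⟨Finset.sdiff_subset, hFΔ, card_sdiff⟩, ← mul_assoc, complementSign_mul_self, one_mul]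

lemma bdS_apply_eq_zero_of_card_ne {T : Set (Finset V)} {p : ℕ} {c : Finset V →₀ K}
    (hc : c ∈ faceSpan K T p) {S : Finset V} (hS : S.card + 1 ≠ p) : bdS K c S = 0 := by
  rw [← filter_card_eq_self hc, bdS_filter_card, filter_apply, if_neg hS]

lemma bdS_sdiff_of_mem_faceSpan {Δ : Set (Finset V)} (hΔ : IsLowerSet Δ) {W : Finset V} {p : ℕ}
    {c : Finset V →₀ K} (hc : c ∈ faceSpan K {U | U ⊆ W ∧ W \ U ∈ Δ} p) {f : Finset V → K}
    (hf : ∀ F ∈ restrictComplex Δ W, F.card + p = W.card → dualCochain W c F = f F)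
    {F : Finset V} (hF : F ∈ restrictComplex Δ W) :
    bdS K c (W \ F) =
      if F.card + p = W.card + 1 then complementSign K W F * coboundary f F else 0 := by
  split_ifs with hp
  · rw [bdS_sdiff hF.2 fun U hU ↦ (mem_supported' ..).1 (mem_faceSpan.1 hc).1 U fun h ↦ hU h.1]
    refine congr_arg _ (coboundary_congr fun x hx ↦ hf _
      ⟨hΔ (F.erase_subset x) hF.1, (F.erase_subset x).trans hF.2⟩ ?_)
    rw [← Finset.card_erase_add_one hx] at hp
    omega
  · refine bdS_apply_eq_zero_of_card_ne hc ?_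
    rw [← Finset.card_sdiff_add_card_eq_card hF.2] at hp
    omega

variable {Δ : Set (Finset V)} {W : Finset V} {p q : ℕ}

lemma ExactOn.cohomologyVanishes (hΔ : IsLowerSet Δ) (hpq : p + q = W.card)
    (exact : ExactOn K {U | U ⊆ W ∧ W \ U ∈ Δ} p) :
    CohomologyVanishes K (restrictComplex Δ W) q := by
  intro f hf
  obtain ⟨c, hc, hcf⟩ := exists_dualCochain_eq Δ W f p
  have cycle : ∀ U ∈ {U | U ⊆ W ∧ W \ U ∈ Δ}, bdS K c U = 0 :=
    forall_subset_sdiff_mem_iff.2 fun F hF ↦ by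
      rw [bdS_sdiff_of_mem_faceSpan hΔ hc hcf hF]
      split_ifs with hF'
      · rw [hf F hF (by omega), mul_zero]
      · rfl
  obtain ⟨w, hw, hwc⟩ := exact c hc cycle
  refine ⟨dualCochain W w, fun F hF hq ↦ ?_⟩
  rw [← hcf F hF (by omega), dualCochain, ← forall_subset_sdiff_mem_iff.1 hwc F hF,
    bdS_sdiff_of_mem_faceSpan hΔ hw (fun _ _ _ ↦ rfl) hF, if_pos (by omega), ← mul_assoc,
    complementSign_mul_self, one_mul]

lemma CohomologyVanishes.exactOn (hΔ : IsLowerSet Δ) (hpq : p + q = W.card)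
    (vanishes : CohomologyVanishes K (restrictComplex Δ W) q) :
    ExactOn K {U | U ⊆ W ∧ W \ U ∈ Δ} p := by
  intro c hc hbd
  have cocycle (F) (hF : F ∈ restrictComplex Δ W) (hq : F.card = q + 1) :
      coboundary (dualCochain W c) F = 0 := by
    have bd_eq := forall_subset_sdiff_mem_iff.1 hbd F hF
    rw [bdS_sdiff_of_mem_faceSpan hΔ hc (fun _ _ _ ↦ rfl) hF, if_pos (by omega)] at bd_eq
    exact (mul_eq_zero.1 bd_eq).resolve_left
      (left_ne_zero_of_mul_eq_one (complementSign_mul_self W F))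
  obtain ⟨g, hg⟩ := vanishes _ cocycle
  obtain ⟨w, hw, hwg⟩ := exists_dualCochain_eq Δ W g (p + 1)
  refine ⟨w, hw, forall_subset_sdiff_mem_iff.2 fun F hF ↦ ?_⟩
  rw [bdS_sdiff_of_mem_faceSpan hΔ hw hwg hF]
  split_ifs with hF'
  · rw [← hg F hF (by omega), dualCochain, ← mul_assoc, complementSign_mul_self, one_mul]
  · by_contra! hcF
    have card_eq := (mem_faceSpan.1 hc).2 _ hcF.symm
    rw [← Finset.card_sdiff_add_card_eq_card hF.2] at hF'
    omega

lemma exactOn_complement_iff (hΔ : IsLowerSet Δ) (p : ℕ) (W : Finset V) :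
    ExactOn K {U | U ⊆ W ∧ W \ U ∈ Δ} p ↔
      ∀ q, p + q = W.card → CohomologyVanishes K (restrictComplex Δ W) q := by
  refine ⟨fun h q hpq ↦ h.cohomologyVanishes hΔ hpq, fun h ↦ ?_⟩
  rcases le_or_gt p W.card with hp | hp
  · obtain ⟨q, hq⟩ := Nat.exists_eq_add_of_le hp
    exact (h q hq.symm).exactOn hΔ hq.symm
  · intro c hc _
    have c_eq_zero : c = 0 := by
      ext U
      by_contra hU
      obtain ⟨hcT, hcp⟩ := mem_faceSpan.1 hc
      have hUW : U ⊆ W := by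
        by_contra hUW
        exact hU ((mem_supported' ..).1 hcT U fun h ↦ hUW h.1)
      exact (Finset.card_le_card hUW).not_gt (hcp U hU ▸ hp)
    exact ⟨0, zero_mem _, fun S _ ↦ by rw [c_eq_zero, map_zero]⟩

end Cohomology

section Hochster

variable {K : Type} [Field K] {n r : ℕ}

theorem betti_squarefreeGens_eq_zero_iff (e : Fin r → Finset (Fin n)) (i j : ℕ) :
    betti K (squarefreeGens e) i j = 0 ↔ ∀ W : Finset (Fin n), W.card = j → ∀ q, i + 1 + q = j →
      CohomologyVanishes K (restrictComplex {F | ∀ k, ¬e k ⊆ F} W) q := by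
  have isLowerSet_independent : IsLowerSet {F : Finset (Fin n) | ∀ k, ¬e k ⊆ F} :=
    fun _ _ hGF hF k hk ↦ hF k (hk.trans hGF)
  rw [betti, torRank_squarefreeGens_eq_zero_iff]
  refine forall₂_congr fun W hW ↦ ?_
  rw [exactOn_covering_iff, ← hW]
  exact exactOn_complement_iff isLowerSet_independent (i + 1) W

lemma edgeGens_eq_squarefreeGens (G : SimpleGraph (Fin n)) :
    edgeGens G = squarefreeGens fun k ↦ ((edgeFins G).equivFin.symm k).1.toFinset := by
  funext k x
  simp only [edgeGens, squarefreeGens, Sym2.mem_toFinset]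

lemma setOf_forall_not_edge_subset (G : SimpleGraph (Fin n)) :
    {F | ∀ k, ¬((edgeFins G).equivFin.symm k).1.toFinset ⊆ F} = flagComplex Gᶜ := by
  ext F
  have forall_edge_iff : (∀ k, ¬((edgeFins G).equivFin.symm k).1.toFinset ⊆ F) ↔
      ∀ x y, G.Adj x y → ¬(x ∈ F ∧ y ∈ F) := by
    rw [(edgeFins G).equivFin.symm.forall_congr_right (q := fun d ↦ ¬d.1.toFinset ⊆ F),
      Subtype.forall, Sym2.forall]
    simp [edgeFins, Sym2.toFinset_mk_eq, Finset.insert_subset_iff]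
  rw [Set.mem_ofPred_eq, forall_edge_iff]
  simp only [flagComplex, SimpleGraph.compl_adj, Set.mem_ofPred_eq]
  grind [SimpleGraph.Adj.ne]

theorem gBetti_eq_zero_iff (G : SimpleGraph (Fin n)) (i j : ℕ) :
    gBetti K G i j = 0 ↔ ∀ W : Finset (Fin n), W.card = j → ∀ q, i + 1 + q = j →
      CohomologyVanishes K (restrictComplex (flagComplex Gᶜ) W) q := by
  rw [gBetti, edgeGens_eq_squarefreeGens, betti_squarefreeGens_eq_zero_iff,
    setOf_forall_not_edge_subset]

end Hochster

section Graphs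

variable {X : Type*} {H : SimpleGraph X}

lemma eq_of_reachable {A : Type*} {g : X → A} (hg : ∀ x y, H.Adj x y → g x = g y) {x y : X}
    (hxy : H.Reachable x y) : g x = g y := by
  obtain ⟨p⟩ := hxy
  induction p with
  | nil => rfl
  | cons hadj _ ih => exact (hg _ _ hadj).trans ih

lemma exists_potential_of_isAcyclic [Finite X] {A : Type*} [AddCommGroup A] (hH : H.IsAcyclic)
    {φ : X → X → A} (hφ : ∀ x y, H.Adj x y → φ y x = -φ x y) :
    ∃ g : X → A, ∀ x y, H.Adj x y → g y - g x = φ x y := by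
  classical
  induction H using WellFoundedLT.induction with
  | ind H ih =>
  by_cases h_edge : ∃ u v, H.Adj u v
  · obtain ⟨u, v, huv⟩ := h_edge
    have del_le := H.deleteEdges_le {s(u, v)}
    have bridge : ¬(H.deleteEdges {s(u, v)}).Reachable u v :=
      SimpleGraph.isBridge_iff.1 (SimpleGraph.isAcyclic_iff_forall_adj_isBridge.1 hH huv)
    obtain ⟨g, hg⟩ := ih _ (lt_of_le_not_ge del_le fun h ↦ by simpa using h huv) (hH.anti del_le)
      fun x y hxy ↦ hφ x y (del_le hxy)
    set H' := H.deleteEdges {s(u, v)}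
    -- Shifting `g` on the side of `v` of the cut corrects its increment along the bridge only.
    let g' x := g x + if H'.Reachable x v then φ u v - (g v - g u) else 0
    have increment_uv : g' v - g' u = φ u v := by
      simp only [g', SimpleGraph.Reachable.refl, bridge, if_true, if_false]
      abel
    refine ⟨g', fun x y hxy ↦ ?_⟩
    by_cases hxy' : H'.Adj x y
    · have same_side : H'.Reachable x v ↔ H'.Reachable y v :=
        ⟨hxy'.symm.reachable.trans, hxy'.reachable.trans⟩
      simp only [g', same_side, add_sub_add_right_eq_sub, hg x y hxy']
    · obtain ⟨rfl, rfl⟩ | ⟨rfl, rfl⟩ : x = u ∧ y = v ∨ x = v ∧ y = u := by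
        by_contra h
        exact hxy' (SimpleGraph.deleteEdges_adj.2 ⟨hxy, by simpa [Sym2.eq_iff] using h⟩)
      · exact increment_uv
      · rw [hφ _ _ huv, ← increment_uv, neg_sub]
  · exact ⟨0, fun x y hxy ↦ absurd ⟨x, y, hxy⟩ h_edge⟩

lemma isAcyclic_of_forall_adj_le_unique (height : X → ℕ)
    (unique : ∀ x y z, H.Adj x y → H.Adj x z → height y ≤ height x → height z ≤ height x → y = z) :
    H.IsAcyclic := by
  classical
  intro v p hp
  obtain ⟨x, hx, x_max⟩ := p.support.toFinset.exists_max_image height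
    ⟨v, List.mem_toFinset.2 p.start_mem_support⟩
  rw [List.mem_toFinset] at hx
  let c := p.rotate x hx
  have hc : c.IsCycle := hp.rotate hx
  have height_le {y : X} (hy : y ∈ c.support) : height y ≤ height x :=
    x_max y (List.mem_toFinset.2 ((p.mem_support_rotate_iff x hx).1 hy))
  exact hc.snd_ne_penultimate <| unique x _ _ (c.adj_snd hc.not_nil)
    (c.adj_penultimate hc.not_nil).symm (height_le (c.getVert_mem_support 1))
    (height_le (c.getVert_mem_support _))

end Graphs

section FlagComplex

variable {K : Type} [Field K] {V : Type} {H : SimpleGraph V}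

lemma singleton_mem_restrictComplex_flagComplex {W : Finset V} {x : V} :
    {x} ∈ restrictComplex (flagComplex H) W ↔ x ∈ W := by
  simp [restrictComplex, flagComplex]

lemma card_lt_of_mem_flagComplex {m : ℕ} (hH : H.CliqueFree m) {F : Finset V}
    (hF : F ∈ flagComplex H) : F.card < m := by
  by_contra! hm
  exact hH.mono hm F ⟨fun x hx y hy ↦ hF x hx y hy, rfl⟩

variable [LinearOrder V]

lemma coboundary_singleton (f : Finset V → K) (x : V) : coboundary f {x} = f ∅ := by
  simp [coboundary, faceSign, Finset.filter_singleton]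

lemma coboundary_pair (f : Finset V → K) {x y : V} (hxy : x < y) :
    coboundary f {x, y} = f {y} - f {x} := by
  rw [coboundary, Finset.sum_pair hxy.ne]
  simp [faceSign, Finset.filter_insert, Finset.filter_singleton, hxy, hxy.not_gt, hxy.ne,
    Finset.erase_insert_of_ne, sub_eq_add_neg]

lemma coboundary_pair_eq_zero_iff (f : Finset V → K) {x y : V} (hxy : x ≠ y) :
    coboundary f {x, y} = 0 ↔ f {x} = f {y} := by
  rcases hxy.lt_or_gt with h | h
  · rw [coboundary_pair f h, sub_eq_zero, eq_comm]
  · rw [Finset.pair_comm, coboundary_pair f h, sub_eq_zero]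

lemma pair_mem_restrictComplex_flagComplex {W : Finset V} {x y : V} (hxy : x ≠ y) :
    {x, y} ∈ restrictComplex (flagComplex H) W ↔ H.Adj x y ∧ x ∈ W ∧ y ∈ W := by
  simp [restrictComplex, flagComplex, Finset.insert_subset_iff, hxy, hxy.symm, H.adj_comm y x]

lemma cohomologyVanishes_of_cliqueFree {m q : ℕ} (hH : H.CliqueFree m) (hmq : m ≤ q)
    (W : Finset V) : CohomologyVanishes K (restrictComplex (flagComplex H) W) q := fun _ _ ↦
  ⟨0, fun _ hF hq ↦ absurd (card_lt_of_mem_flagComplex hH hF.1) (by omega)⟩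

lemma cohomologyVanishes_zero {W : Finset V} (hW : W.Nonempty) :
    CohomologyVanishes K (restrictComplex (flagComplex H) W) 0 := by
  intro f hf
  obtain ⟨x, hx⟩ := hW
  have f_empty : f ∅ = 0 := by
    rw [← coboundary_singleton f x]
    exact hf _ (singleton_mem_restrictComplex_flagComplex.2 hx) (Finset.card_singleton x)
  refine ⟨0, fun F _ hF ↦ ?_⟩
  rw [Finset.card_eq_zero.1 hF, f_empty, coboundary, Finset.sum_empty]

lemma cohomologyVanishes_one [Fintype V] (hH : H.Preconnected) :
    CohomologyVanishes K (restrictComplex (flagComplex H) Finset.univ) 1 := by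
  intro f hf
  have locally_const (x y : V) (hxy : H.Adj x y) : f {x} = f {y} := by
    rw [← coboundary_pair_eq_zero_iff f hxy.ne]
    exact hf _ ((pair_mem_restrictComplex_flagComplex hxy.ne).2
      ⟨hxy, Finset.mem_univ x, Finset.mem_univ y⟩) (Finset.card_pair hxy.ne)
  rcases isEmpty_or_nonempty V with _ | ⟨⟨x₀⟩⟩
  · exact ⟨0, fun F _ hF ↦ by simp [Subsingleton.elim F ∅] at hF⟩
  · refine ⟨fun _ ↦ f {x₀}, fun F _ hF ↦ ?_⟩
    obtain ⟨x, rfl⟩ := Finset.card_eq_one.1 hF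
    rw [coboundary_singleton]
    exact eq_of_reachable locally_const (hH x x₀)

lemma CohomologyVanishes.isAcyclic_induce {W : Finset V} (hH : H.CliqueFree 3)
    (vanishes : CohomologyVanishes K (restrictComplex (flagComplex H) W) 2) :
    (H.induce (W : Set V)).IsAcyclic := by
  rw [SimpleGraph.isAcyclic_iff_forall_adj_isBridge]
  rintro ⟨u, hu⟩ ⟨v, hv⟩ huv
  rw [SimpleGraph.isBridge_iff]
  intro reachable
  have mem_of_adj {x y : V} (hx : x ∈ W) (hy : y ∈ W) (hxy : H.Adj x y) :
      {x, y} ∈ restrictComplex (flagComplex H) W :=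
    (pair_mem_restrictComplex_flagComplex hxy.ne).2 ⟨hxy, hx, hy⟩
  obtain ⟨g, hg⟩ := vanishes (Pi.single {u, v} 1) fun F hF hcard ↦
    absurd (card_lt_of_mem_flagComplex hH hF.1) (by omega)
  have locally_const (x y : (W : Set V))
      (hxy : ((H.induce (W : Set V)).deleteEdges {s(⟨u, hu⟩, ⟨v, hv⟩)}).Adj x y) :
      g {x.1} = g {y.1} := by
    obtain ⟨hadj, hne⟩ : H.Adj x y ∧ s(x, y) ∉ _ := SimpleGraph.deleteEdges_adj.1 hxy
    have pair_ne : ({x.1, y.1} : Finset V) ≠ {u, v} := fun h ↦ hne <| Sym2.eq_iff.2 <| by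
      simpa only [Subtype.ext_iff, ← Finset.coe_inj, Finset.coe_pair, Set.pair_eq_pair_iff] using h
    rw [← coboundary_pair_eq_zero_iff g hadj.ne,
      ← hg _ (mem_of_adj x.2 y.2 hadj) (Finset.card_pair hadj.ne), Pi.single_eq_of_ne pair_ne]
  replace huv : H.Adj u v := huv
  have cob_zero := (coboundary_pair_eq_zero_iff g huv.ne).2
    (eq_of_reachable (g := fun x : (W : Set V) ↦ g {x.1}) locally_const reachable)
  rw [← hg _ (mem_of_adj hu hv huv) (Finset.card_pair huv.ne), Pi.single_eq_same] at cob_zero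
  exact one_ne_zero cob_zero

lemma cohomologyVanishes_two_of_isAcyclic {W : Finset V}
    (hW : (H.induce (W : Set V)).IsAcyclic) :
    CohomologyVanishes K (restrictComplex (flagComplex H) W) 2 := by
  intro f _
  have antisymm (x y : (W : Set V)) (hxy : (H.induce (W : Set V)).Adj x y) :
      (if y < x then f {y.1, x.1} else -f {y.1, x.1}) =
        -if x < y then f {x.1, y.1} else -f {x.1, y.1} := by
    rcases hxy.ne.lt_or_gt with h | h <;> simp [h, h.not_gt, Finset.pair_comm]
  obtain ⟨g, hg⟩ := exists_potential_of_isAcyclic hW antisymm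
  let vertexFace (x : (W : Set V)) : Finset V := {x.1}
  have vertexFace_injective : vertexFace.Injective :=
    Finset.singleton_injective.comp Subtype.val_injective
  refine ⟨Function.extend vertexFace g 0, fun F hF hcard ↦ ?_⟩
  obtain ⟨x, y, hxy, rfl⟩ : ∃ x y, x < y ∧ {x, y} = F := by
    obtain ⟨x, y, hne, rfl⟩ := Finset.card_eq_two.1 hcard
    rcases hne.lt_or_gt with h | h
    exacts [⟨x, y, h, rfl⟩, ⟨y, x, h, Finset.pair_comm y x⟩]
  obtain ⟨hadj, hx, hy⟩ := (pair_mem_restrictComplex_flagComplex hxy.ne).1 hF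
  have increment : g ⟨y, hy⟩ - g ⟨x, hx⟩ = f {x, y} :=
    (hg ⟨x, hx⟩ ⟨y, hy⟩ hadj).trans (if_pos hxy)
  rw [coboundary_pair _ hxy, ← increment]
  exact congr_arg₂ _ (vertexFace_injective.extend_apply g 0 ⟨y, hy⟩).symm
    (vertexFace_injective.extend_apply g 0 ⟨x, hx⟩).symm

end FlagComplex

section Betti

variable {K : Type} [Field K] {n : ℕ} {G : SimpleGraph (Fin n)} {i j : ℕ}

lemma gBetti_eq_zero_of_cliqueFree_compl (hG : Gᶜ.CliqueFree 3) (hij : i + 3 < j) :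
    gBetti K G i j = 0 :=
  (gBetti_eq_zero_iff G i j).2 fun W _ q hq ↦
    cohomologyVanishes_of_cliqueFree hG (by omega) W

lemma gBetti_add_three_eq_zero_iff (hG : Gᶜ.CliqueFree 3) :
    gBetti K G i (i + 3) = 0 ↔
      ∀ W : Finset (Fin n), W.card = i + 3 → (Gᶜ.induce (W : Set (Fin n))).IsAcyclic := by
  rw [gBetti_eq_zero_iff]
  refine forall₂_congr fun W _ ↦ ⟨fun h ↦ (h 2 rfl).isAcyclic_induce hG, fun h q hq ↦ ?_⟩
  obtain rfl : q = 2 := by omega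
  exact cohomologyVanishes_two_of_isAcyclic h

lemma gBetti_eq_zero_of_preconnected_compl (hG : Gᶜ.Preconnected) (hn : n ≤ i + 2) :
    gBetti K G i j = 0 := by
  refine (gBetti_eq_zero_iff G i j).2 fun W hW q hq ↦ ?_
  have card_le : W.card ≤ n := W.card_le_univ.trans_eq (Fintype.card_fin n)
  obtain rfl | rfl : q = 0 ∨ q = 1 := by omega
  · exact cohomologyVanishes_zero (Finset.card_pos.1 (by omega))
  · obtain rfl : W = Finset.univ :=
      Finset.eq_univ_of_card W (by rw [Fintype.card_fin]; omega)
    exact cohomologyVanishes_one hG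

end Betti

end EP

namespace Ga1

variable {t : ℕ}

lemma adj_iff {x y : Fin (t + 4)} : (Ga1 t).Adj x y ↔
    ((y : ℕ) = x + 1 ∧ (y : ℕ) ≤ t + 2 ∨ (x : ℕ) = y + 1 ∧ (x : ℕ) ≤ t + 2) ∨
    ((x : ℕ) = 0 ∧ t + 2 ≤ (y : ℕ) ∨ (y : ℕ) = 0 ∧ t + 2 ≤ (x : ℕ)) := by
  rw [Ga1, SimpleGraph.fromRel_adj, ← Fin.val_ne_iff]
  omega

lemma cliqueFree_three (ht : 1 ≤ t) : (Ga1 t).CliqueFree 3 := by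
  intro s hs
  obtain ⟨x, y, z, hxy, hxz, hyz, -⟩ := SimpleGraph.is3Clique_iff.1 hs
  rw [adj_iff] at hxy hxz hyz
  omega

lemma adj_castSucc_of_cycleGraph_adj {x y : Fin (t + 3)}
    (hxy : (SimpleGraph.cycleGraph (t + 3)).Adj x y) : (Ga1 t).Adj x.castSucc y.castSucc := by
  rw [SimpleGraph.cycleGraph_adj'] at hxy
  rw [adj_iff, Fin.val_castSucc, Fin.val_castSucc]
  rcases lt_trichotomy x y with h | rfl | h
  · rw [Fin.coe_sub_iff_lt.2 h, Fin.coe_sub_iff_le.2 h.le] at hxy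
    omega
  · simp at hxy
  · rw [Fin.coe_sub_iff_lt.2 h, Fin.coe_sub_iff_le.2 h.le] at hxy
    omega

lemma preconnected : (Ga1 t).Preconnected := by
  have reachable_zero (x : Fin (t + 4)) : (Ga1 t).Reachable x 0 := by
    induction x using Fin.lastCases with
    | last => exact (adj_iff.2 (by simp)).reachable
    | cast x =>
      exact (SimpleGraph.cycleGraph_preconnected x 0).map ⟨_, adj_castSucc_of_cycleGraph_adj⟩
  exact fun x y ↦ (reachable_zero x).trans (reachable_zero y).symm

lemma not_isAcyclic_induce {W : Finset (Fin (t + 4))} (hW : ∀ x : Fin (t + 3), x.castSucc ∈ W) :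
    ¬((Ga1 t).induce (W : Set (Fin (t + 4)))).IsAcyclic := by
  intro acyclic
  let inclusion : SimpleGraph.cycleGraph (t + 3) →g (Ga1 t).induce (W : Set (Fin (t + 4))) :=
    ⟨fun x ↦ ⟨x.castSucc, hW x⟩, adj_castSucc_of_cycleGraph_adj⟩
  have inclusion_injective : Function.Injective inclusion := fun _ _ h ↦
    Fin.castSucc_injective _ (congr_arg Subtype.val h)
  exact acyclic.comap inclusion inclusion_injective _ SimpleGraph.cycleGraph.isCycle_cycle

lemma exists_castSucc_notMem {W : Finset (Fin (t + 4))} (hW : W.card < t + 3) :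
    ∃ x : Fin (t + 3), x.castSucc ∉ W := by
  by_contra! h
  have card_le := Finset.card_le_card_of_injOn (s := Finset.univ) Fin.castSucc
    (fun x _ ↦ h x) (Fin.castSucc_injective _).injOn
  rw [Finset.card_univ, Fintype.card_fin] at card_le
  omega

lemma isAcyclic_induce {W : Finset (Fin (t + 4))} (hW : W.card < t + 3) :
    ((Ga1 t).induce (W : Set (Fin (t + 4)))).IsAcyclic := by
  obtain ⟨c, hc⟩ := exists_castSucc_notMem hW
  have val_ne (x : (W : Set (Fin (t + 4)))) : (x : ℕ) ≠ c := fun h ↦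
    hc ((Fin.ext h : x.1 = c.castSucc) ▸ x.2)
  -- The position along the path into which the cycle is cut at the missing vertex `c`; the
  -- pendant vertex comes above the whole path.
  let height (x : ℕ) : ℕ :=
    if x = t + 3 then t + 3 else if (c : ℕ) ≤ x then x - c else x + (t + 3) - c
  refine EP.isAcyclic_of_forall_adj_le_unique (fun x ↦ height x) fun x y z hxy hxz hyx hzx ↦ ?_
  rw [SimpleGraph.induce_adj, adj_iff] at hxy hxz
  have hx := val_ne x
  have hy := val_ne y
  have hz := val_ne z
  have hc := c.isLt
  apply Subtype.ext ∘ Fin.ext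
  dsimp only [height] at hyx hzx
  split_ifs at hyx hzx <;> omega

end Ga1

/-- If the complement of `G` is `G_{(a)_1}` (a `(t+3)`-cycle with one
extra vertex joined to a single vertex of the cycle, `t ≥ 1`), then
`β_{t+1,t+4}(I(G)) ≠ 0` and `β_{t+2,j}(I(G)) = 0` for all `j`, so `pd(I(G)) = t + 1` while
`index(I(G)) = t`. -/
theorem statement11 (K : Type) [Field K] (t : ℕ) (ht : 1 ≤ t)
    (G : SimpleGraph (Fin (t + 4))) (hG : Gᶜ = Ga1 t) :
    EP.gBetti K G (t + 1) (t + 4) ≠ 0 ∧ (∀ j, EP.gBetti K G (t + 2) j = 0) ∧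
    EP.gPd K G = t + 1 ∧ EP.gIndex K G = (t : ℕ∞) := by
  have cliqueFree : Gᶜ.CliqueFree 3 := hG ▸ Ga1.cliqueFree_three ht
  have betti_ne_zero {i : ℕ} (W : Finset (Fin (t + 4))) (hcard : W.card = i + 3)
      (hW : ∀ x : Fin (t + 3), x.castSucc ∈ W) : EP.gBetti K G i (i + 3) ≠ 0 := fun h ↦
    Ga1.not_isAcyclic_induce hW (hG ▸ (EP.gBetti_add_three_eq_zero_iff cliqueFree).1 h W hcard)
  have betti_top : EP.gBetti K G (t + 1) (t + 4) ≠ 0 :=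
    betti_ne_zero Finset.univ (by simp) (by simp)
  have betti_cycle : EP.gBetti K G t (t + 3) ≠ 0 :=
    betti_ne_zero (Finset.univ.map Fin.castSuccEmb) (by simp) (by simp)
  have betti_above {i : ℕ} (hi : t + 2 ≤ i) (j : ℕ) : EP.gBetti K G i j = 0 :=
    EP.gBetti_eq_zero_of_preconnected_compl (hG ▸ Ga1.preconnected) (by omega)
  have betti_below {i j : ℕ} (hi : i < t) (hij : i + 2 < j) : EP.gBetti K G i j = 0 := by
    obtain rfl | hij : j = i + 3 ∨ i + 3 < j := by omega
    · exact (EP.gBetti_add_three_eq_zero_iff cliqueFree).2 fun W hW ↦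
        hG ▸ Ga1.isAcyclic_induce (by omega)
    · exact EP.gBetti_eq_zero_of_cliqueFree_compl cliqueFree hij
  refine ⟨betti_top, betti_above le_rfl, IsGreatest.csSup_eq ⟨⟨_, betti_top⟩, ?_⟩,
    IsLeast.csInf_eq ⟨⟨t, _, rfl, by omega, betti_cycle⟩, ?_⟩⟩
  · rintro i ⟨j, hne⟩
    exact not_lt.1 fun hi ↦ hne (betti_above hi j)
  · rintro _ ⟨i, j, rfl, hij, hne⟩
    exact Nat.cast_le.2 (not_lt.1 fun hi ↦ hne (betti_below hi hij))
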